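/- arXiv:2401.10086 — 2 statements merged into one kernel-verified Lean document; each statement's English description precedes it below -/
import Mathlib

section
/- Let n ≥ 2 be an integer. For every ε > 0 there exists a constant C = C(n, ε) such that for all real H ≥ 2, the number of n×n matrices with all entries in E(H) and with determinant equal to 0 is at most C·H^{2+ε} if n = 2, at most C·H^{7+ε} if n = 3, and at most C·H^{n²−n/2+ε} if n ≥ 4. -/
/-- The set of Egyptian (unit) fractions `1/a` with `a` a nonzero integer, `|a| ≤ H`. -/
def Egyptian (H : ℝ) : Set ℚ := {x : ℚ | ∃ a : ℤ, a ≠ 0 ∧ (|a| : ℝ) ≤ H ∧ x = 1 / (a : ℚ)}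

/-!
Among the columns of a singular matrix of unit fractions choose a minimal dependent set `S`, say of
size `k`. Up to scaling, these columns satisfy a single linear relation `c`, all of whose
coefficients are nonzero and which is determined by `k - 1` rows `R`; by Siegel's lemma `c` can be
taken integral and of polynomial height. Once the rows `R` are chosen (`H ^ {n(k-1)}` ways) and with
them `c`, every other row has `n - k` free entries, while its entries `1 / x_j` in the columns `S`
solve `∑ c_j / x_j = 0`.

A prime dividing `∏ x_j` but not `∏ c_j` divides at least two of the `x_j`, so outside the primes of
`∏ c_j` the product `∏ x_j` is squarefull, which leaves about `H ^ {k/2}` values; by the divisor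
bound each comes from `H ^ {o(1)}` vectors `x`. The total exponent `n ^ 2 - k(n - k + 1) / 2` is
largest for `k = n`. For `k = 3` the divisor bound applied to
`(c₂x + c₀z)(c₂y + c₁z) = c₀c₁z²` gives `H` instead of `H ^ {3/2}`, whence the exponent `7` for
`n = 3`, and for `n = 2` it applies directly to `a₀₁a₁₀ = a₀₀a₁₁`.
-/

open Finset Filter Asymptotics Matrix

section Growth

lemma isBigO_rpow_rpow_of_le {E E' : ℝ} (h : E ≤ E') :
    (fun N : ℕ => (N : ℝ) ^ E) =O[atTop] fun N : ℕ => (N : ℝ) ^ E' := by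
  refine .of_bound' ?_
  filter_upwards [eventually_ge_atTop 1] with N hN
  have hN' : (1 : ℝ) ≤ N := mod_cast hN
  rw [Real.norm_of_nonneg (by positivity), Real.norm_of_nonneg (by positivity)]
  exact Real.rpow_le_rpow_of_exponent_le hN' h

/-- `HasGrowth f E` is the estimate `f(N) ≪_ε N^{E+ε}` for every `ε > 0`. -/
def HasGrowth (f : ℕ → ℕ) (E : ℝ) : Prop :=
  ∀ ε > (0 : ℝ), (fun N => (f N : ℝ)) =O[atTop] fun N => (N : ℝ) ^ (E + ε)

namespace HasGrowth

variable {f g : ℕ → ℕ} {E E' : ℝ}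

lemma mono (hf : HasGrowth f E) (h : E ≤ E') : HasGrowth f E' := fun ε hε =>
  (hf ε hε).trans (isBigO_rpow_rpow_of_le (by linarith))

lemma of_le (hg : HasGrowth g E) (h : ∀ N, 1 ≤ N → f N ≤ g N) : HasGrowth f E := fun ε hε => by
  refine .trans (.of_bound' ?_) (hg ε hε)
  filter_upwards [eventually_ge_atTop 1] with N hN
  simpa using h N hN

lemma const (c : ℕ) : HasGrowth (fun _ => c) 0 := fun ε hε => by
  have h : (fun _ : ℕ => (c : ℝ)) =O[atTop] fun N : ℕ => (N : ℝ) ^ (0 : ℝ) := by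
    simpa only [Real.rpow_zero] using isBigO_const_const (c : ℝ) one_ne_zero _
  exact h.trans (isBigO_rpow_rpow_of_le (by linarith))

lemma id : HasGrowth (fun N => N) 1 := fun ε hε => by
  simpa using isBigO_rpow_rpow_of_le (E := 1) (E' := 1 + ε) (by linarith)

lemma mul (hf : HasGrowth f E) (hg : HasGrowth g E') :
    HasGrowth (fun N => f N * g N) (E + E') := fun ε hε => by
  refine ((hf (ε / 2) (half_pos hε)).mul (hg (ε / 2) (half_pos hε))).congr' ?_ ?_
  · simp
  · filter_upwards [eventually_gt_atTop 0] with N hN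
    rw [← Real.rpow_add (by exact_mod_cast hN)]
    ring_nf

lemma pow (hf : HasGrowth f E) : ∀ k : ℕ, HasGrowth (fun N => f N ^ k) (E * k)
  | 0 => by simpa using const 1
  | k + 1 => by simpa [pow_succ, mul_add] using (hf.pow k).mul hf

lemma sum {α : Type*} {s : Finset α} {F : α → ℕ → ℕ} (h : ∀ a ∈ s, HasGrowth (F a) E) :
    HasGrowth (fun N => ∑ a ∈ s, F a N) E := fun ε hε => by
  simpa using IsBigO.fun_sum fun a ha => h a ha ε hε

lemma isBigO_rpow (hf : HasGrowth f E) {r ε : ℝ} (hr : 0 < r) (hε : 0 < ε) :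
    (fun N => (f N : ℝ) ^ r) =O[atTop] fun N => (N : ℝ) ^ (E * r + ε) := by
  refine ((hf (ε / r) (by positivity)).rpow hr.le (.of_forall fun N => by positivity)).congr_right
    fun N => ?_
  rw [← Real.rpow_mul N.cast_nonneg, add_mul, div_mul_cancel₀ _ hr.ne']

lemma sqrt (hf : HasGrowth f E) : HasGrowth (fun N => (f N).sqrt) (E / 2) := fun ε hε => by
  rw [div_eq_mul_one_div]
  refine .trans (.of_bound' (.of_forall fun N => ?_)) (hf.isBigO_rpow one_half_pos hε)
  rw [← Real.sqrt_eq_rpow, Real.norm_natCast, Real.norm_of_nonneg (Real.sqrt_nonneg _)]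
  exact Real.nat_sqrt_le_real_sqrt

end HasGrowth

end Growth

section DivisorBound

lemma natCast_add_one_le_two_rpow {ε : ℝ} (hε : 0 < ε) (a : ℕ) :
    (a + 1 : ℝ) ≤ (1 + 1 / (ε * Real.log 2)) * (2 : ℝ) ^ (a * ε) := by
  set t := ε * Real.log 2
  have ht0 : 0 < t := by positivity
  have hexp : 1 + a * t ≤ (2 : ℝ) ^ (a * ε) := by
    rw [Real.rpow_def_of_pos two_pos]
    linarith [Real.add_one_le_exp (Real.log 2 * (a * ε))]
  calc (a + 1 : ℝ) ≤ a + 1 + (1 / t + a * t) := by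
        have : 0 ≤ 1 / t + a * t := by positivity
        linarith
    _ = (1 + 1 / t) * (1 + a * t) := by field_simp; ring
    _ ≤ _ := by gcongr

lemma natCast_add_one_le_rpow {ε x : ℝ} (hε : 0 < ε) (hx : 2 ≤ x) (a : ℕ) :
    (a + 1 : ℝ) ≤ (if x ^ ε < 2 then 1 + 1 / (ε * Real.log 2) else 1) * (x ^ a) ^ ε := by
  have hx0 : 0 ≤ x := by linarith
  split_ifs with h
  · calc (a + 1 : ℝ) ≤ (1 + 1 / (ε * Real.log 2)) * (2 : ℝ) ^ (a * ε) :=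
        natCast_add_one_le_two_rpow hε a
      _ ≤ (1 + 1 / (ε * Real.log 2)) * x ^ (a * ε) := by gcongr
      _ = _ := by rw [Real.rpow_mul hx0, Real.rpow_natCast]
  · calc (a + 1 : ℝ) ≤ 2 ^ a := mod_cast Nat.lt_two_pow_self
      _ ≤ (x ^ ε) ^ a := by gcongr; exact not_lt.1 h
      _ = _ := by rw [one_mul, Real.rpow_pow_comm hx0]

lemma card_filter_rpow_lt_le {ε b : ℝ} (hε : 0 < ε) (hb : 0 ≤ b) (s : Finset ℕ) :
    #{p ∈ s | ((p : ℕ) : ℝ) ^ ε < b} ≤ ⌈b ^ (1 / ε)⌉₊ := by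
  refine (card_le_card fun p hp => ?_).trans (card_range _).le
  rw [mem_range, Nat.lt_ceil, one_div, Real.lt_rpow_inv_iff_of_pos p.cast_nonneg hb hε]
  exact (mem_filter.1 hp).2

lemma exists_card_divisors_le_mul_rpow {ε : ℝ} (hε : 0 < ε) :
    ∃ K : ℝ, 0 ≤ K ∧ ∀ m : ℕ, (#m.divisors : ℝ) ≤ K * (m : ℝ) ^ ε := by
  set L : ℝ := 1 + 1 / (ε * Real.log 2)
  have hL : 1 ≤ L := le_add_of_nonneg_right (by positivity)
  refine ⟨L ^ ⌈(2 : ℝ) ^ (1 / ε)⌉₊, by positivity, fun m => ?_⟩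
  rcases eq_or_ne m 0 with rfl | hm
  · simp [Real.zero_rpow hε.ne']
  have hfactor : (m : ℝ) ^ ε = ∏ p ∈ m.primeFactors, ((p : ℝ) ^ m.factorization p) ^ ε := by
    rw [Real.finsetProd_rpow _ _ fun p _ => by positivity]
    congr 1
    exact_mod_cast (Nat.prod_factorization_pow_eq_self hm).symm
  calc (#m.divisors : ℝ) = ∏ p ∈ m.primeFactors, (m.factorization p + 1 : ℝ) := by
        rw [Nat.card_divisors hm]; push_cast; rfl
    _ ≤ ∏ p ∈ m.primeFactors,
          ((if (p : ℝ) ^ ε < 2 then L else 1) * ((p : ℝ) ^ m.factorization p) ^ ε) :=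
        prod_le_prod (fun p _ => by positivity) fun p hp =>
          natCast_add_one_le_rpow hε (mod_cast (Nat.prime_of_mem_primeFactors hp).two_le) _
    _ = L ^ #{p ∈ m.primeFactors | ((p : ℕ) : ℝ) ^ ε < 2} * (m : ℝ) ^ ε := by
        rw [prod_mul_distrib, ← hfactor, ← prod_filter, prod_const]
    _ ≤ L ^ ⌈(2 : ℝ) ^ (1 / ε)⌉₊ * (m : ℝ) ^ ε := by
        gcongr
        exact card_filter_rpow_lt_le hε zero_le_two _

/-- The maximal order of the divisor function on `[0, M]`; every use of the divisor bound goes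
through it. -/
def maxCardDivisors (M : ℕ) : ℕ := (range (M + 1)).sup fun m => #m.divisors

lemma card_divisors_le_maxCardDivisors {m M : ℕ} (h : m ≤ M) : #m.divisors ≤ maxCardDivisors M :=
  le_sup (f := fun m => #(Nat.divisors m)) (mem_range.2 (Nat.lt_succ_of_le h))

lemma maxCardDivisors_mono : Monotone maxCardDivisors := fun _ _ h =>
  sup_mono (range_mono (by lia))

lemma HasGrowth.maxCardDivisors {f : ℕ → ℕ} {E : ℝ} (hf : HasGrowth f E) :
    HasGrowth (fun N => maxCardDivisors (f N)) 0 := fun ε hε => by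
  set δ := ε / (2 * (|E| + 1)) with hδ
  have hδ0 : 0 < δ := by positivity
  obtain ⟨K, hK, hdiv⟩ := exists_card_divisors_le_mul_rpow hδ0
  have hmax : ∀ M : ℕ, (_root_.maxCardDivisors M : ℝ) ≤ K * (M : ℝ) ^ δ := fun M => by
    obtain ⟨m, hm, heq⟩ := exists_mem_eq_sup (range (M + 1)) nonempty_range_add_one
      fun m => #m.divisors
    rw [_root_.maxCardDivisors, heq]
    refine (hdiv m).trans ?_
    gcongr
    exact Nat.lt_succ_iff.1 (mem_range.1 hm)
  have hE : E * δ + ε / 2 ≤ 0 + ε := by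
    have : (|E| + 1) * δ = ε / 2 := by rw [hδ]; field_simp
    nlinarith [le_abs_self E]
  refine .trans (.of_bound K (.of_forall fun N => ?_))
    ((hf.isBigO_rpow hδ0 (half_pos hε)).trans (isBigO_rpow_rpow_of_le hE))
  rw [Real.norm_natCast, Real.norm_of_nonneg (by positivity)]
  exact hmax (f N)

lemma card_intDivisors_le {z : ℤ} {M : ℕ} (h : z.natAbs ≤ M) :
    #z.divisors ≤ 2 * maxCardDivisors M := by
  have hcard : #z.divisors = 2 * #z.natAbs.divisors := by
    rw [Int.divisors, card_disjUnion, card_map, card_map, two_mul]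
  rw [hcard]
  exact Nat.mul_le_mul_left 2 (card_divisors_le_maxCardDivisors h)

lemma card_intDivisorsAntidiag_le {z : ℤ} {M : ℕ} (h : z.natAbs ≤ M) :
    #z.divisorsAntidiag ≤ 2 * maxCardDivisors M := by
  refine le_trans (le_of_eq ?_) (card_intDivisors_le h)
  rw [← Int.image_fst_divisorsAntidiag, card_image_of_injOn]
  rintro ⟨a, b⟩ hab ⟨a', b'⟩ hab' (rfl : a = a')
  simp only [mem_coe, Int.mem_divisorsAntidiag] at hab hab'
  have ha : a ≠ 0 := left_ne_zero_of_mul (hab.1 ▸ hab.2)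
  rw [mul_left_cancel₀ ha (hab.1.trans hab'.1.symm)]

end DivisorBound

lemma card_le_mul_pow_of_card_fiber_le {ι α : Type*} {F : Finset (ι → α)} {s : Finset ι}
    {B : Finset α} {M : ℕ} (hB : ∀ a ∈ F, ∀ i ∈ s, a i ∈ B)
    (hM : ∀ a₀ ∈ F, ∀ G ⊆ F, (∀ a ∈ G, ∀ i ∈ s, a i = a₀ i) → #G ≤ M) : #F ≤ M * #B ^ #s := by
  classical
  have hmap : ∀ a ∈ F, s.restrict a ∈ Fintype.piFinset fun _ : s => B :=
    fun a ha => Fintype.mem_piFinset.2 fun i => hB a ha i i.2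
  have hfiber : ∀ b ∈ F.image s.restrict, #{a ∈ F | s.restrict a = b} ≤ M := fun b hb => by
    obtain ⟨a₀, ha₀, rfl⟩ := mem_image.1 hb
    exact hM a₀ ha₀ _ (filter_subset _ _) fun a ha i hi =>
      congrFun (mem_filter.1 ha).2 ⟨i, hi⟩
  calc #F ≤ M * #(F.image s.restrict) := card_le_mul_card_image F M hfiber
    _ ≤ M * #B ^ #s := by
        grw [image_subset_iff.2 hmap, Fintype.card_piFinset, prod_const, card_univ,
          Fintype.card_coe]

section Squareful

lemma exists_sq_mul_eq_and_dvd_mul {m C : ℕ} (h : ∀ p, p.Prime → p ∣ m → p ∣ C ∨ p ^ 2 ∣ m) :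
    ∃ b a, b ^ 2 * a = m ∧ a ∣ b * C := by
  obtain ⟨a, b, rfl, ha⟩ := Nat.sq_mul_squarefree m
  refine ⟨b, a, rfl, ?_⟩
  rw [← Nat.prod_primeFactors_of_squarefree ha]
  refine prod_primes_dvd _ (fun p hp => (Nat.prime_of_mem_primeFactors hp).prime) fun p hp => ?_
  have hpp := Nat.prime_of_mem_primeFactors hp
  rcases h p hpp ((Nat.dvd_of_mem_primeFactors hp).mul_left _) with hpC | hpm
  · exact hpC.mul_left b
  · have hpb : p ∣ b ^ 2 := ha.dvd_of_squarefree_of_mul_dvd_mul_left (sq p ▸ hpm)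
    exact (hpp.dvd_of_dvd_pow hpb).mul_right C

lemma card_le_sqrt_mul_maxCardDivisors {s : Finset ℕ} {M C : ℕ} (hC : C ≠ 0)
    (hpos : ∀ m ∈ s, m ≠ 0) (hle : ∀ m ∈ s, m ≤ M)
    (hsq : ∀ m ∈ s, ∀ p, p.Prime → p ∣ m → p ∣ C ∨ p ^ 2 ∣ m) :
    #s ≤ M.sqrt * maxCardDivisors (M.sqrt * C) := by
  have hsub : s ⊆ (Icc 1 M.sqrt).biUnion fun b => (b * C).divisors.image (b ^ 2 * ·) := by
    intro m hm
    obtain ⟨b, a, rfl, hab⟩ := exists_sq_mul_eq_and_dvd_mul (hsq m hm)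
    have hb : b ≠ 0 := fun hb => hpos _ hm (by simp [hb])
    have ha : a ≠ 0 := right_ne_zero_of_mul (hpos _ hm)
    have hbM : b ≤ M.sqrt :=
      Nat.le_sqrt'.2 ((Nat.le_mul_of_pos_right _ ha.bot_lt).trans (hle _ hm))
    exact mem_biUnion.2 ⟨b, mem_Icc.2 ⟨hb.bot_lt, hbM⟩,
      mem_image_of_mem _ (Nat.mem_divisors.2 ⟨hab, mul_ne_zero hb hC⟩)⟩
  calc #s ≤ #(Icc 1 M.sqrt) * maxCardDivisors (M.sqrt * C) := by
        refine (card_le_card hsub).trans (card_biUnion_le_card_mul _ _ _ fun b hb => ?_)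
        exact card_image_le.trans <| card_divisors_le_maxCardDivisors <|
          Nat.mul_le_mul_right C (mem_Icc.1 hb).2
    _ = _ := by rw [Nat.card_Icc, Nat.add_sub_cancel]

end Squareful

section ReciprocalEquation

variable {κ : Type*} [Fintype κ]

lemma natAbs_prod_le {N : ℕ} {x : κ → ℤ} (hx : ∀ j, (x j).natAbs ≤ N) :
    (∏ j, x j).natAbs ≤ N ^ Fintype.card κ := by
  rw [← Int.natAbsHom_apply, map_prod]
  exact prod_le_pow_card _ _ _ fun j _ => hx j

lemma card_le_of_natAbs_prod_eq {m : ℕ} (hm : m ≠ 0) {F : Finset (κ → ℤ)}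
    (hF : ∀ x ∈ F, (∏ j, x j).natAbs = m) : #F ≤ (2 * maxCardDivisors m) ^ Fintype.card κ := by
  classical
  have hsub : F ⊆ Fintype.piFinset fun _ => (m : ℤ).divisors := fun x hx => by
    refine Fintype.mem_piFinset.2 fun j => Int.mem_divisors.2 ⟨?_, Int.natCast_ne_zero.2 hm⟩
    exact (dvd_prod_of_mem x (mem_univ j)).trans (Int.natAbs_dvd_natAbs.1 (hF x hx).dvd)
  refine (card_le_card hsub).trans ?_
  rw [Fintype.card_piFinset, prod_const, card_univ]
  exact Nat.pow_le_pow_left (card_intDivisors_le (Int.natAbs_natCast m).le) _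

variable [DecidableEq κ]

lemma sum_inv_mul_eq_zero_iff {K : Type*} [Field K] {x c : κ → K} (hx : ∀ j, x j ≠ 0) :
    ∑ j, (x j)⁻¹ * c j = 0 ↔ ∑ j, c j * ∏ l ∈ univ.erase j, x l = 0 := by
  have hprod : ∏ j, x j ≠ 0 := prod_ne_zero_iff.2 fun j _ => hx j
  have hclear : ∑ j, c j * ∏ l ∈ univ.erase j, x l = (∏ j, x j) * ∑ j, (x j)⁻¹ * c j := by
    rw [mul_sum]
    refine sum_congr rfl fun j _ => ?_
    rw [← mul_prod_erase univ x (mem_univ j)]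
    field_simp [hx j]
  rw [hclear, mul_eq_zero, or_iff_right hprod]

lemma sq_dvd_prod_of_dvd_prod {R : Type*} [CommRing R] {p : R} (hp : Prime p) {x c : κ → R}
    (h : ∑ j, c j * ∏ l ∈ univ.erase j, x l = 0) (hc : ¬ p ∣ ∏ j, c j) (hx : p ∣ ∏ j, x j) :
    p ^ 2 ∣ ∏ j, x j := by
  obtain ⟨j, -, hj⟩ := hp.exists_mem_finset_dvd hx
  have hother : p ∣ ∑ i ∈ univ.erase j, c i * ∏ l ∈ univ.erase i, x l := dvd_sum fun i hi =>
    dvd_mul_of_dvd_right (hj.trans (dvd_prod_of_mem x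
      (mem_erase.2 ⟨(ne_of_mem_erase hi).symm, mem_univ j⟩))) _
  have hterm : p ∣ c j * ∏ l ∈ univ.erase j, x l := by
    rw [← add_sum_erase univ _ (mem_univ j)] at h
    exact (dvd_add_left hother).1 (h ▸ dvd_zero p)
  have hrest : p ∣ ∏ l ∈ univ.erase j, x l :=
    (hp.dvd_or_dvd hterm).resolve_left fun hcj => hc (hcj.trans (dvd_prod_of_mem c (mem_univ j)))
  rw [sq, ← mul_prod_erase univ x (mem_univ j)]
  exact mul_dvd_mul hj hrest

/-- The nonzero integers of absolute value at most `N`: the denominators of the unit fractions of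
height at most `N`. -/
noncomputable def nonzeroBox (N : ℕ) : Finset ℤ := (Icc (-N : ℤ) N).erase 0

lemma mem_nonzeroBox {N : ℕ} {z : ℤ} : z ∈ nonzeroBox N ↔ z ≠ 0 ∧ z.natAbs ≤ N := by
  simp only [nonzeroBox, mem_erase, mem_Icc]
  lia

lemma card_nonzeroBox (N : ℕ) : #(nonzeroBox N) = 2 * N := by
  rw [nonzeroBox, card_erase_of_mem (by simp), Int.card_Icc]
  lia

/-- The solutions `x` of the reciprocal equation `∑ c_j / x_j = 0` in nonzero integers of absolute
value at most `N`. -/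
noncomputable def reciprocalSolutions (N : ℕ) (c : κ → ℤ) : Finset (κ → ℤ) :=
  {x ∈ Fintype.piFinset fun _ => nonzeroBox N | ∑ j, (x j : ℚ)⁻¹ * c j = 0}

variable {N : ℕ} {c x : κ → ℤ}

lemma mem_reciprocalSolutions : x ∈ reciprocalSolutions N c ↔
    (∀ j, x j ∈ nonzeroBox N) ∧ ∑ j, (x j : ℚ)⁻¹ * c j = 0 := by
  rw [reciprocalSolutions, mem_filter, Fintype.mem_piFinset]

lemma dvd_or_sq_dvd_natAbs_prod (hx : x ∈ reciprocalSolutions N c) {p : ℕ} (hp : p.Prime)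
    (hpx : p ∣ (∏ j, x j).natAbs) : p ∣ (∏ j, c j).natAbs ∨ p ^ 2 ∣ (∏ j, x j).natAbs := by
  obtain ⟨hbox, hsum⟩ := mem_reciprocalSolutions.1 hx
  rw [sum_inv_mul_eq_zero_iff fun j => Int.cast_ne_zero.2 (mem_nonzeroBox.1 (hbox j)).1] at hsum
  refine or_iff_not_imp_left.2 fun hpc => ?_
  rw [← Int.natCast_dvd] at hpc hpx ⊢
  exact_mod_cast sq_dvd_prod_of_dvd_prod (Nat.prime_iff_prime_int.1 hp) (mod_cast hsum) hpc hpx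

lemma card_reciprocalSolutions_le (hc : ∀ j, c j ≠ 0) :
    #(reciprocalSolutions N c) ≤
      (2 * maxCardDivisors (N ^ Fintype.card κ)) ^ Fintype.card κ *
        ((N ^ Fintype.card κ).sqrt *
          maxCardDivisors ((N ^ Fintype.card κ).sqrt * (∏ j, c j).natAbs)) := by
  have hne : ∀ x ∈ reciprocalSolutions N c, (∏ j, x j).natAbs ≠ 0 := fun x hx =>
    Int.natAbs_ne_zero.2 <| prod_ne_zero_iff.2 fun j _ =>
      (mem_nonzeroBox.1 ((mem_reciprocalSolutions.1 hx).1 j)).1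
  have hle : ∀ x ∈ reciprocalSolutions N c, (∏ j, x j).natAbs ≤ N ^ Fintype.card κ := fun x hx =>
    natAbs_prod_le fun j => (mem_nonzeroBox.1 ((mem_reciprocalSolutions.1 hx).1 j)).2
  have hfiber : ∀ m ∈ (reciprocalSolutions N c).image fun x => (∏ j, x j).natAbs,
      #{x ∈ reciprocalSolutions N c | (∏ j, x j).natAbs = m} ≤
        (2 * maxCardDivisors (N ^ Fintype.card κ)) ^ Fintype.card κ :=
    forall_mem_image.2 fun x₀ hx₀ =>
      (card_le_of_natAbs_prod_eq (hne x₀ hx₀) fun x hx => (mem_filter.1 hx).2).trans <| by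
        gcongr
        exact maxCardDivisors_mono (hle x₀ hx₀)
  refine (card_le_mul_card_image _ _ hfiber).trans (Nat.mul_le_mul_left _ ?_)
  exact card_le_sqrt_mul_maxCardDivisors
    (Int.natAbs_ne_zero.2 (prod_ne_zero_iff.2 fun j _ => hc j)) (forall_mem_image.2 hne)
    (forall_mem_image.2 hle)
    (forall_mem_image.2 fun x hx p hp => dvd_or_sq_dvd_natAbs_prod hx hp)

lemma sum_three_eq_zero_of_mem_reciprocalSolutions (hx : x ∈ reciprocalSolutions N c)
    (e : Fin 3 ≃ κ) :
    c (e 0) * (x (e 1) * x (e 2)) + c (e 1) * (x (e 0) * x (e 2)) +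
      c (e 2) * (x (e 0) * x (e 1)) = 0 := by
  obtain ⟨hbox, hsum⟩ := mem_reciprocalSolutions.1 hx
  have hne i : (x (e i) : ℚ) ≠ 0 := Int.cast_ne_zero.2 (mem_nonzeroBox.1 (hbox (e i))).1
  rw [← e.sum_comp, Fin.sum_univ_three] at hsum
  field_simp [hne 0, hne 1, hne 2] at hsum
  norm_cast at hsum
  linear_combination hsum

/- The equation `c₀yz + c₁xz + c₂xy = 0` is `(c₂x + c₀z)(c₂y + c₁z) = c₀c₁z²`, so for fixed `z` the
divisor bound applies. -/
lemma card_filter_apply_eq_le (hc : ∀ j, c j ≠ 0) (e : Fin 3 ≃ κ) {z : ℤ} (hz : z ≠ 0) :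
    #{x ∈ reciprocalSolutions N c | x (e 2) = z} ≤
      #(c (e 0) * c (e 1) * z ^ 2).divisorsAntidiag := by
  refine card_le_card_of_injOn
    (fun x => (c (e 2) * x (e 0) + c (e 0) * z, c (e 2) * x (e 1) + c (e 1) * z)) ?_ ?_
  · intro x hx
    obtain ⟨hsol, rfl⟩ := mem_filter.1 hx
    have h := sum_three_eq_zero_of_mem_reciprocalSolutions hsol e
    exact Int.mem_divisorsAntidiag.2
      ⟨by linear_combination c (e 2) * h, by simp [hc, hz]⟩
  · intro x hx y hy hxy
    rw [mem_coe, mem_filter] at hx hy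
    simp only [Prod.mk_inj, add_left_inj, mul_right_inj' (hc (e 2))] at hxy
    refine funext (e.surjective.forall.2 fun i => ?_)
    fin_cases i
    exacts [hxy.1, hxy.2, hx.2.trans hy.2.symm]

lemma card_reciprocalSolutions_le_of_card_eq_three (hκ : Fintype.card κ = 3) (hc : ∀ j, c j ≠ 0)
    {X : ℕ} (hX : ∀ j, (c j).natAbs ≤ X) :
    #(reciprocalSolutions N c) ≤ 2 * maxCardDivisors (X * X * N ^ 2) * (2 * N) := by
  obtain ⟨e⟩ : Nonempty (Fin 3 ≃ κ) := ⟨(Fintype.equivFinOfCardEq hκ).symm⟩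
  have hmap : ∀ x ∈ reciprocalSolutions N c, x (e 2) ∈ nonzeroBox N :=
    fun x hx => (mem_reciprocalSolutions.1 hx).1 (e 2)
  rw [← card_nonzeroBox N]
  refine card_le_mul_card_image_of_maps_to hmap _ fun z hz => ?_
  obtain ⟨hz0, hzN⟩ := mem_nonzeroBox.1 hz
  refine (card_filter_apply_eq_le hc e hz0).trans (card_intDivisorsAntidiag_le ?_)
  rw [Int.natAbs_mul, Int.natAbs_mul, Int.natAbs_pow]
  gcongr
  exacts [hX _, hX _]

/-- The maximal number of solutions in the box of size `N` of a reciprocal equation with nonzero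
coefficients of absolute value at most `X`. -/
noncomputable def maxSolutions (κ : Type*) [Fintype κ] [DecidableEq κ] (X N : ℕ) : ℕ :=
  (Fintype.piFinset fun _ : κ => nonzeroBox X).sup fun c => #(reciprocalSolutions N c)

lemma card_reciprocalSolutions_le_maxSolutions {X : ℕ} (hc : ∀ j, c j ∈ nonzeroBox X) :
    #(reciprocalSolutions N c) ≤ maxSolutions κ X N :=
  le_sup (f := fun c => #(reciprocalSolutions N c)) (Fintype.mem_piFinset.2 hc)

lemma HasGrowth.maxSolutions {X : ℕ → ℕ} {E : ℝ} (hX : HasGrowth X E) :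
    HasGrowth (fun N => maxSolutions κ (X N) N) (Fintype.card κ / 2) := by
  set k := Fintype.card κ
  have hpow : HasGrowth (fun N => N ^ k) k := by simpa using HasGrowth.id.pow k
  have h := (((const 2).mul hpow.maxCardDivisors).pow k).mul
    (hpow.sqrt.mul (hpow.sqrt.mul (hX.pow k)).maxCardDivisors)
  refine (h.mono (by simp)).of_le fun N _ => Finset.sup_le fun c hc => ?_
  have hc' j := mem_nonzeroBox.1 (Fintype.mem_piFinset.1 hc j)
  refine (card_reciprocalSolutions_le fun j => (hc' j).1).trans ?_
  gcongr
  exact maxCardDivisors_mono (Nat.mul_le_mul_left _ (natAbs_prod_le fun j => (hc' j).2))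

lemma HasGrowth.maxSolutions_of_card_eq_three (hκ : Fintype.card κ = 3) {X : ℕ → ℕ} {E : ℝ}
    (hX : HasGrowth X E) : HasGrowth (fun N => _root_.maxSolutions κ (X N) N) 1 := by
  have h := ((const 2).mul ((hX.mul hX).mul (HasGrowth.id.pow 2)).maxCardDivisors).mul
    ((const 2).mul HasGrowth.id)
  refine (h.mono (by simp)).of_le fun N _ => Finset.sup_le fun c hc => ?_
  have hc' j := mem_nonzeroBox.1 (Fintype.mem_piFinset.1 hc j)
  exact card_reciprocalSolutions_le_of_card_eq_three hκ (fun j => (hc' j).1) fun j => (hc' j).2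

end ReciprocalEquation

section Circuit

variable {m n K : Type*} [Field K]

/-- `IsCircuit A R S`: up to scaling there is exactly one linear relation among the columns `S` of
`A`, it involves all of them, and it is determined by the `#S - 1` rows `R`. Thus `S` is a circuit
of the column matroid, and `R` is a basis of the row space of the columns `S`. -/
structure IsCircuit (A : Matrix m n K) (R : Finset m) (S : Finset n) : Prop where
  mulVec_eq_zero : ∀ w : S → K,
    (∀ i ∈ R, (A.submatrix id (↑) *ᵥ w) i = 0) → A.submatrix id (↑) *ᵥ w = 0
  apply_ne_zero : ∀ w : S → K, A.submatrix id (↑) *ᵥ w = 0 → w ≠ 0 → ∀ j, w j ≠ 0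
  card_add_one : #R + 1 = #S

lemma exists_finset_card_eq_rank [Finite m] {κ : Type*} [Fintype κ] (B : Matrix m κ K) :
    ∃ R : Finset m, #R = B.rank ∧
      ∀ w : κ → K, (∀ i ∈ R, (B *ᵥ w) i = 0) → B *ᵥ w = 0 := by
  obtain ⟨σ, a, ha, hspan, hli⟩ := exists_linearIndependent' K B.row
  have := Finite.of_injective a ha
  have := Fintype.ofFinite σ
  refine ⟨univ.map ⟨a, ha⟩, ?_, fun w hw => funext fun i => ?_⟩
  · rw [card_map, card_univ, B.rank_eq_finrank_span_row, ← hspan]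
    exact (finrank_span_eq_card hli).symm
  · have hker : Submodule.span K (Set.range (B.row ∘ a)) ≤
        LinearMap.ker ((dotProductBilin K K).flip w) :=
      Submodule.span_le.2 <| by
        rintro _ ⟨t, rfl⟩
        exact hw (a t) (mem_map_of_mem _ (mem_univ t))
    exact hker (hspan ▸ Submodule.subset_span ⟨i, rfl⟩)

lemma submatrix_mulVec_restrict {S T : Finset n} (hTS : T ⊆ S) (A : Matrix m n K) {v : S → K}
    (hv : ∀ j : S, (j : n) ∉ T → v j = 0) :
    A.submatrix id ((↑) : T → n) *ᵥ (fun j => v ⟨j, hTS j.2⟩) =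
      A.submatrix id ((↑) : S → n) *ᵥ v := by
  funext i
  refine Fintype.sum_of_injective (fun j : T => ⟨j, hTS j.2⟩)
    (fun _ _ h => Subtype.ext (by simpa using h)) _ _ (fun j hj => ?_) fun j => rfl
  rw [hv j fun hjT => hj ⟨⟨j, hjT⟩, rfl⟩, mul_zero]

lemma exists_minimal_relation [Fintype n] {A : Matrix m n K} (hA : ∃ v ≠ 0, A *ᵥ v = 0) :
    ∃ S : Finset n, (∃ v : S → K, v ≠ 0 ∧ A.submatrix id (↑) *ᵥ v = 0) ∧
      ∀ w : S → K, A.submatrix id (↑) *ᵥ w = 0 → w ≠ 0 → ∀ j, w j ≠ 0 := by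
  classical
  have huniv : ∃ v : ↥(univ : Finset n) → K, v ≠ 0 ∧ A.submatrix id (↑) *ᵥ v = 0 := by
    obtain ⟨v, hv, hAv⟩ := hA
    refine ⟨fun j => v j, fun h => hv (funext fun j => congrFun h ⟨j, mem_univ j⟩), ?_⟩
    rw [← hAv]
    exact funext fun i => sum_coe_sort univ fun j => A i j * v j
  obtain ⟨S, hS, hmin⟩ := exists_minimal_of_wellFoundedLT
    (fun S : Finset n => ∃ v : S → K, v ≠ 0 ∧ A.submatrix id (↑) *ᵥ v = 0) ⟨univ, huniv⟩
  refine ⟨S, hS, fun w hw hw0 j hj => ?_⟩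
  have hvanish : ∀ i : S, (i : n) ∉ S.erase j → w i = 0 := fun i hi => by
    obtain rfl : i = j := by simpa using hi
    exact hj
  refine (erase_ssubset j.2).not_subset (hmin ⟨fun i => w ⟨i, erase_subset _ _ i.2⟩, ?_, ?_⟩
    (erase_subset _ _))
  · refine fun h => hw0 (funext fun i => ?_)
    by_cases hi : (i : n) ∈ S.erase j
    · exact congrFun h ⟨i, hi⟩
    · exact hvanish i hi
  · rw [submatrix_mulVec_restrict (erase_subset _ _) A hvanish, hw]

lemma rank_add_one_eq_card {κ : Type*} [Fintype κ] {B : Matrix m κ K}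
    (hB : ∃ v ≠ 0, B *ᵥ v = 0) (hne : ∀ w, B *ᵥ w = 0 → w ≠ 0 → ∀ j, w j ≠ 0) :
    B.rank + 1 = Fintype.card κ := by
  obtain ⟨v, hv, hBv⟩ := hB
  obtain ⟨j, -⟩ := Function.ne_iff.1 hv
  have hker : Module.finrank K (LinearMap.ker B.mulVecLin) = 1 := by
    refine (finrank_eq_one_iff_of_nonzero' ⟨v, hBv⟩ (Subtype.coe_ne_coe.1 hv)).2 ?_
    rintro ⟨w, hw : B *ᵥ w = 0⟩
    refine ⟨w j / v j, Subtype.ext ?_⟩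
    have hsub : w - (w j / v j) • v = 0 := by
      by_contra h
      refine hne _ ?_ h j ?_
      · rw [mulVec_sub, mulVec_smul, hw, hBv, smul_zero, sub_zero]
      · simp [div_mul_cancel₀ _ (hne v hBv hv j)]
    exact (sub_eq_zero.1 hsub).symm
  rw [Matrix.rank, ← hker, LinearMap.finrank_range_add_finrank_ker,
    Module.finrank_fintype_fun_eq_card]

lemma exists_isCircuit [Finite m] [Fintype n] {A : Matrix m n K} (hA : ∃ v ≠ 0, A *ᵥ v = 0) :
    ∃ R S, IsCircuit A R S := by
  obtain ⟨S, hS, hne⟩ := exists_minimal_relation hA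
  obtain ⟨R, hR, hker⟩ := exists_finset_card_eq_rank (A.submatrix id ((↑) : S → n))
  exact ⟨R, S, hker, hne, by rw [hR, rank_add_one_eq_card hS hne, Fintype.card_coe]⟩

lemma IsCircuit.two_le_card [Nonempty m] {A : Matrix m n K} {R : Finset m} {S : Finset n}
    (h : IsCircuit A R S) (hA : ∀ i j, A i j ≠ 0) : 2 ≤ #S := by
  by_contra! hlt
  have hcard := h.card_add_one
  obtain ⟨hR, hS⟩ : #R = 0 ∧ #S = 1 := by lia
  obtain ⟨j, rfl⟩ := card_eq_one.1 hS
  obtain ⟨i⟩ := ‹Nonempty m›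
  have hzero := congrFun (h.mulVec_eq_zero 1 (by simp [card_eq_zero.1 hR])) i
  simp [mulVec, dotProduct, hA] at hzero

end Circuit

section CommonRelation

attribute [local instance] Matrix.seminormedAddCommGroup

lemma exists_ne_zero_mulVec_eq_zero_natAbs_le {α β : Type*} [Fintype α] [Fintype β]
    {A : Matrix α β ℤ} {Y : ℕ} (hY : 1 ≤ Y) (hA : ∀ i j, (A i j).natAbs ≤ Y)
    (hα : 0 < Fintype.card α) (hαβ : Fintype.card α + 1 = Fintype.card β) :
    ∃ t : β → ℤ, t ≠ 0 ∧ A *ᵥ t = 0 ∧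
      ∀ j, (t j).natAbs ≤ (Fintype.card β * Y) ^ Fintype.card α := by
  obtain ⟨t, ht0, ht, hbound⟩ := Int.Matrix.exists_ne_zero_int_vec_norm_le A (by lia) hα
  refine ⟨t, ht0, ht, fun j => ?_⟩
  have hcodim : (Fintype.card β : ℝ) - Fintype.card α = 1 := by
    rw [← hαβ]; push_cast; ring
  rw [hcodim, div_one, Real.rpow_natCast] at hbound
  have hAY : ‖A‖ ≤ Y := (Matrix.norm_le_iff Y.cast_nonneg).2 fun i j => by
    rw [Int.norm_eq_abs, ← Int.cast_abs, Int.abs_eq_natAbs]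
    exact_mod_cast hA i j
  have htj : ‖t j‖ ≤ (Fintype.card β * Y : ℝ) ^ Fintype.card α := by
    refine (norm_le_pi_norm t j).trans (hbound.trans ?_)
    gcongr
    exact max_le (mod_cast hY) hAY
  rw [Int.norm_eq_abs, ← Int.cast_abs, Int.abs_eq_natAbs] at htj
  exact_mod_cast htj

lemma exists_common_relation {m κ : Type*} [Fintype m] [Fintype κ] {x : m → κ → ℤ} {N : ℕ}
    (hx : ∀ i j, x i j ∈ nonzeroBox N) (hm : 0 < Fintype.card m)
    (hκ : Fintype.card m + 1 = Fintype.card κ) :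
    ∃ c : κ → ℤ, c ≠ 0 ∧ (∀ i, ∑ j, (x i j : ℚ)⁻¹ * c j = 0) ∧
      ∀ j, (c j).natAbs ≤ (Fintype.card κ * N ^ Fintype.card κ) ^ Fintype.card m := by
  classical
  have hN : 1 ≤ N := by
    obtain ⟨i⟩ := Fintype.card_pos_iff.1 hm
    obtain ⟨j⟩ := Fintype.card_pos_iff.1 (Nat.lt_of_lt_of_eq (Nat.succ_pos _) hκ)
    have := mem_nonzeroBox.1 (hx i j)
    lia
  have hA i j : (∏ l ∈ univ.erase j, x i l).natAbs ≤ N ^ Fintype.card κ := by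
    rw [← Int.natAbsHom_apply, map_prod]
    refine (prod_le_pow_card _ _ N fun l _ => (mem_nonzeroBox.1 (hx i l)).2).trans ?_
    exact Nat.pow_le_pow_right hN (card_le_univ _)
  obtain ⟨c, hc, hAc, hbound⟩ := exists_ne_zero_mulVec_eq_zero_natAbs_le
    (A := Matrix.of fun i j => ∏ l ∈ univ.erase j, x i l) (Nat.one_le_pow _ _ hN) hA hm hκ
  refine ⟨c, hc, fun i => ?_, hbound⟩
  rw [sum_inv_mul_eq_zero_iff fun j => Int.cast_ne_zero.2 (mem_nonzeroBox.1 (hx i j)).1]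
  have h := congrFun hAc i
  simp only [mulVec, dotProduct, of_apply, mul_comm (∏ _ ∈ _, _)] at h
  exact_mod_cast h

end CommonRelation

section SingularMatrices

variable {ι : Type*}

/-- The matrix of unit fractions whose entries have the denominators `a`. -/
def unitFractionMatrix (a : ι → ι → ℤ) : Matrix ι ι ℚ :=
  Matrix.of fun i j => (a i j : ℚ)⁻¹

lemma unitFractionMatrix_submatrix_mulVec (a : ι → ι → ℤ) {S : Finset ι} (w : S → ℚ) (i : ι) :
    ((unitFractionMatrix a).submatrix id (↑) *ᵥ w) i = ∑ j : S, (a i j : ℚ)⁻¹ * w j := rfl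

lemma IsCircuit.exists_relation {a : ι → ι → ℤ} {R S : Finset ι} {N : ℕ}
    (h : IsCircuit (unitFractionMatrix a) R S) (ha : ∀ i j, a i j ∈ nonzeroBox N) (hS : 2 ≤ #S) :
    ∃ c : S → ℤ, (∀ j, c j ∈ nonzeroBox ((#S * N ^ #S) ^ #R)) ∧
      ∀ b : ι → ι → ℤ, IsCircuit (unitFractionMatrix b) R S → (∀ i ∈ R, b i = a i) →
        ∀ i, ∑ j : S, (b i j : ℚ)⁻¹ * c j = 0 := by
  have hcard := h.card_add_one
  obtain ⟨c, hc, hac, hbound⟩ := exists_common_relation (x := fun (i : R) (j : S) => a i j)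
    (fun i j => ha i j) (by rw [Fintype.card_coe]; lia) (by simpa only [Fintype.card_coe])
  simp only [Fintype.card_coe] at hbound
  have hrel : ∀ b : ι → ι → ℤ, IsCircuit (unitFractionMatrix b) R S → (∀ i ∈ R, b i = a i) →
      (unitFractionMatrix b).submatrix id (↑) *ᵥ (fun j : S => (c j : ℚ)) = 0 :=
    fun b hb hba => hb.mulVec_eq_zero _ fun i hi => by
      rw [unitFractionMatrix_submatrix_mulVec, hba i hi]
      exact hac ⟨i, hi⟩
  refine ⟨c, fun j => mem_nonzeroBox.2 ⟨?_, hbound j⟩, fun b hb hba => congrFun (hrel b hb hba)⟩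
  refine Int.cast_ne_zero.1 (h.apply_ne_zero _ (hrel a h fun _ _ => rfl) (fun hc0 => hc ?_) j)
  exact funext fun j => Int.cast_eq_zero.1 (congrFun hc0 j)

variable [Fintype ι] [DecidableEq ι]

lemma card_le_card_reciprocalSolutions_mul {N : ℕ} {S : Finset ι} {c : S → ℤ}
    {Q : Finset (ι → ℤ)} (hbox : ∀ x ∈ Q, ∀ j, x j ∈ nonzeroBox N)
    (hsum : ∀ x ∈ Q, ∑ j : S, (x j : ℚ)⁻¹ * c j = 0) :
    #Q ≤ #(reciprocalSolutions N c) * (2 * N) ^ #Sᶜ := by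
  rw [← card_nonzeroBox N]
  refine card_le_mul_pow_of_card_fiber_le (fun x hx j _ => hbox x hx j)
    fun x₀ _ G hGQ hG => ?_
  refine card_le_card_of_injOn S.restrict (fun x hx => ?_) fun x hx y hy hxy => funext fun j => ?_
  · exact mem_reciprocalSolutions.2 ⟨fun j => hbox x (hGQ hx) j, hsum x (hGQ hx)⟩
  · by_cases hj : j ∈ S
    · exact congrFun hxy ⟨j, hj⟩
    · exact (hG x hx j (mem_compl.2 hj)).trans (hG y hy j (mem_compl.2 hj)).symm

lemma card_le_of_isCircuit {N : ℕ} {R S : Finset ι} (hS : 2 ≤ #S) {F : Finset (ι → ι → ℤ)}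
    (hbox : ∀ a ∈ F, ∀ i j, a i j ∈ nonzeroBox N)
    (hF : ∀ a ∈ F, IsCircuit (unitFractionMatrix a) R S) :
    #F ≤ (maxSolutions S ((#S * N ^ #S) ^ #R) N * (2 * N) ^ #Sᶜ) ^ #Rᶜ *
      ((2 * N) ^ Fintype.card ι) ^ #R := by
  have hcard : #(Fintype.piFinset fun _ : ι => nonzeroBox N) = (2 * N) ^ Fintype.card ι := by
    rw [Fintype.card_piFinset, prod_const, card_univ, card_nonzeroBox]
  rw [← hcard]
  refine card_le_mul_pow_of_card_fiber_le
    (fun a ha i _ => Fintype.mem_piFinset.2 (hbox a ha i)) fun a₀ ha₀ G hGF hG => ?_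
  obtain ⟨c, hc, hrel⟩ := (hF a₀ ha₀).exists_relation (hbox a₀ ha₀) hS
  let Q : Finset (ι → ℤ) :=
    {x ∈ Fintype.piFinset fun _ => nonzeroBox N | ∑ j : S, (x j : ℚ)⁻¹ * c j = 0}
  have hQ : #Q ≤ maxSolutions S ((#S * N ^ #S) ^ #R) N * (2 * N) ^ #Sᶜ :=
    (card_le_card_reciprocalSolutions_mul (fun x hx => Fintype.mem_piFinset.1 (mem_filter.1 hx).1)
      fun x hx => (mem_filter.1 hx).2).trans
      (Nat.mul_le_mul_right _ (card_reciprocalSolutions_le_maxSolutions hc))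
  refine (card_le_mul_pow_of_card_fiber_le (s := Rᶜ) (B := Q) (M := 1) ?_ ?_).trans ?_
  · exact fun a ha i _ => mem_filter.2 ⟨Fintype.mem_piFinset.2 (hbox a (hGF ha) i),
      hrel a (hF a (hGF ha)) (hG a ha) i⟩
  · refine fun a₁ _ G' hG' hG'a => card_le_one.2 fun a ha b hb => funext fun i => ?_
    by_cases hi : i ∈ R
    · rw [hG a (hG' ha) i hi, hG b (hG' hb) i hi]
    · rw [hG'a a ha i (mem_compl.2 hi), hG'a b hb i (mem_compl.2 hi)]
  · rw [one_mul]
    exact Nat.pow_le_pow_left hQ _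

/-- The denominators of the singular matrices of unit fractions of height at most `N`. -/
noncomputable def singularDenominators (ι : Type*) [Fintype ι] [DecidableEq ι] (N : ℕ) :
    Finset (ι → ι → ℤ) :=
  {a ∈ Fintype.piFinset fun _ => Fintype.piFinset fun _ => nonzeroBox N |
    (unitFractionMatrix a).det = 0}

lemma mem_singularDenominators {N : ℕ} {a : ι → ι → ℤ} : a ∈ singularDenominators ι N ↔
    (∀ i j, a i j ∈ nonzeroBox N) ∧ (unitFractionMatrix a).det = 0 := by
  simp only [singularDenominators, mem_filter, Fintype.mem_piFinset]

lemma card_singularDenominators_le [Nonempty ι] (N : ℕ) :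
    #(singularDenominators ι N) ≤
      ∑ p : Finset ι × Finset ι with 2 ≤ #p.2 ∧ #p.1 + 1 = #p.2,
        (maxSolutions p.2 ((#p.2 * N ^ #p.2) ^ #p.1) N * (2 * N) ^ #p.2ᶜ) ^ #p.1ᶜ *
          ((2 * N) ^ Fintype.card ι) ^ #p.1 := by
  classical
  have hcover : singularDenominators ι N ⊆
      ({p | 2 ≤ #p.2 ∧ #p.1 + 1 = #p.2} : Finset (Finset ι × Finset ι)).biUnion fun p =>
        {a ∈ singularDenominators ι N | IsCircuit (unitFractionMatrix a) p.1 p.2} := by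
    intro a ha
    obtain ⟨hbox, hdet⟩ := mem_singularDenominators.1 ha
    obtain ⟨R, S, h⟩ := exists_isCircuit (Matrix.exists_mulVec_eq_zero_iff.2 hdet)
    have hS : 2 ≤ #S := h.two_le_card fun i j =>
      inv_ne_zero (Int.cast_ne_zero.2 (mem_nonzeroBox.1 (hbox i j)).1)
    exact mem_biUnion.2 ⟨(R, S), by simpa using ⟨hS, h.card_add_one⟩, mem_filter.2 ⟨ha, h⟩⟩
  refine (card_le_card hcover).trans (card_biUnion_le.trans (sum_le_sum fun p hp => ?_))
  exact card_le_of_isCircuit (mem_filter.1 hp).2.1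
    (fun a ha => (mem_singularDenominators.1 (mem_filter.1 ha).1).1) fun a ha => (mem_filter.1 ha).2

lemma hasGrowth_card_singularDenominators [Nonempty ι] {e : ℕ → ℝ} {E : ℝ}
    (he : ∀ (S : Finset ι) (r : ℕ), 2 ≤ #S →
      HasGrowth (fun N => maxSolutions S ((#S * N ^ #S) ^ r) N) (e #S))
    (hE : ∀ k : ℕ, 2 ≤ k → k ≤ Fintype.card ι →
      (e k + (Fintype.card ι - k)) * (Fintype.card ι - k + 1) + Fintype.card ι * (k - 1) ≤ E) :
    HasGrowth (fun N => #(singularDenominators ι N)) E := by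
  refine (HasGrowth.sum fun p hp => ?_).of_le fun N _ => card_singularDenominators_le N
  obtain ⟨hS, hRS⟩ := (mem_filter.1 hp).2
  have hbox : HasGrowth (fun N => 2 * N) 1 := by simpa using (HasGrowth.const 2).mul .id
  refine ((((he p.2 #p.1 hS).mul (hbox.pow _)).pow _).mul ((hbox.pow _).pow _)).mono ?_
  have hR : (#p.1 : ℝ) = #p.2 - 1 := by rw [← hRS]; push_cast; ring
  have hSc : (#p.2ᶜ : ℝ) = Fintype.card ι - #p.2 := by
    rw [card_compl, Nat.cast_sub (card_le_univ _)]
  have hRc : (#p.1ᶜ : ℝ) = Fintype.card ι - #p.2 + 1 := by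
    rw [card_compl, Nat.cast_sub (card_le_univ _), hR]; ring
  rw [hR, hSc, hRc, one_mul, one_mul]
  exact hE _ hS (card_le_univ _)

lemma hasGrowth_relationBound (k r : ℕ) : HasGrowth (fun N => (k * N ^ k) ^ r) (k * r) := by
  simpa using ((HasGrowth.const k).mul (HasGrowth.id.pow k)).pow r

lemma hasGrowth_card_singularDenominators_of_two_le (hι : 2 ≤ Fintype.card ι) :
    HasGrowth (fun N => #(singularDenominators ι N))
      ((Fintype.card ι : ℝ) ^ 2 - Fintype.card ι / 2) := by
  have : Nonempty ι := Fintype.card_pos_iff.1 (by lia)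
  refine hasGrowth_card_singularDenominators (e := fun k => k / 2) (fun S r _ => ?_)
    fun k hk hkn => ?_
  · simpa using (hasGrowth_relationBound #S r).maxSolutions (κ := S)
  · have hk' : (2 : ℝ) ≤ k := mod_cast hk
    have hkn' : (k : ℝ) ≤ Fintype.card ι := mod_cast hkn
    have hmin : (Fintype.card ι : ℝ) ≤ k * (Fintype.card ι - k + 1) := by
      nlinarith [mul_nonneg (sub_nonneg.2 hkn') (sub_nonneg.2 hk')]
    linarith

lemma hasGrowth_card_singularDenominators_of_card_eq_three (hι : Fintype.card ι = 3) :
    HasGrowth (fun N => #(singularDenominators ι N)) 7 := by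
  have : Nonempty ι := Fintype.card_pos_iff.1 (by lia)
  refine hasGrowth_card_singularDenominators (e := fun _ => 1) (fun S r hS => ?_)
    fun k hk hkn => ?_
  · have hX := hasGrowth_relationBound #S r
    obtain h2 | h3 : #S = 2 ∨ #S = 3 := by have := hι ▸ card_le_univ S; lia
    · exact hX.maxSolutions.mono (by simp [h2])
    · exact hX.maxSolutions_of_card_eq_three (by simpa using h3)
  · rw [hι] at hkn ⊢
    interval_cases k <;> norm_num

lemma apply_mul_apply_of_mem_singularDenominators {N : ℕ} {a : Fin 2 → Fin 2 → ℤ}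
    (ha : a ∈ singularDenominators (Fin 2) N) : a 0 1 * a 1 0 = a 0 0 * a 1 1 := by
  have hdet := (mem_singularDenominators.1 ha).2
  simp only [unitFractionMatrix, det_fin_two, of_apply, sub_eq_zero, ← mul_inv,
    _root_.inv_inj] at hdet
  exact_mod_cast hdet.symm

lemma hasGrowth_card_singularDenominators_fin_two :
    HasGrowth (fun N => #(singularDenominators (Fin 2) N)) 2 := by
  have h := ((HasGrowth.const 2).mul ((HasGrowth.id.mul .id).maxCardDivisors)).mul
    (((HasGrowth.const 2).mul .id).mul ((HasGrowth.const 2).mul .id))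
  refine (h.mono (by norm_num)).of_le fun N _ => ?_
  have hmap : ∀ a ∈ singularDenominators (Fin 2) N,
      (a 0 0, a 1 1) ∈ nonzeroBox N ×ˢ nonzeroBox N := fun a ha =>
    mk_mem_product ((mem_singularDenominators.1 ha).1 0 0) ((mem_singularDenominators.1 ha).1 1 1)
  rw [← card_nonzeroBox N, ← card_product]
  refine card_le_mul_card_image_of_maps_to hmap _ fun q hq => ?_
  obtain ⟨⟨hx0, hxN⟩, hy0, hyN⟩ :=
    (mem_product.1 hq).imp mem_nonzeroBox.1 mem_nonzeroBox.1
  have hprod : (q.1 * q.2).natAbs ≤ N * N := by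
    rw [Int.natAbs_mul]
    gcongr
  refine le_trans ?_ (card_intDivisorsAntidiag_le hprod)
  refine card_le_card_of_injOn (fun a => (a 0 1, a 1 0)) (fun a ha => ?_) fun a ha b hb hab => ?_
  · obtain ⟨hmem, rfl⟩ := mem_filter.1 ha
    exact Int.mem_divisorsAntidiag.2
      ⟨apply_mul_apply_of_mem_singularDenominators hmem, mul_ne_zero hx0 hy0⟩
  · have hdiag := (mem_filter.1 ha).2.trans (mem_filter.1 hb).2.symm
    rw [Prod.mk_inj] at hab hdiag
    ext i j
    fin_cases i <;> fin_cases j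
    exacts [hdiag.1, hab.1, hab.2, hdiag.2]

lemma ncard_singular_egyptian_le (H : ℝ) :
    Set.ncard {A : Matrix ι ι ℚ | (∀ i j, A i j ∈ Egyptian H) ∧ A.det = 0} ≤
      #(singularDenominators ι ⌊H⌋₊) := by
  have hsub : {A : Matrix ι ι ℚ | (∀ i j, A i j ∈ Egyptian H) ∧ A.det = 0} ⊆
      (singularDenominators ι ⌊H⌋₊).image unitFractionMatrix := by
    rintro A ⟨hA, hdet⟩
    choose a ha0 haH haA using hA
    obtain rfl : A = unitFractionMatrix a := by
      ext i j
      rw [haA, one_div, unitFractionMatrix, of_apply]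
    refine mem_coe.2 (mem_image_of_mem _ (mem_singularDenominators.2 ⟨fun i j => ?_, hdet⟩))
    refine mem_nonzeroBox.2 ⟨ha0 i j, Nat.le_floor ?_⟩
    rw [Nat.cast_natAbs]
    exact_mod_cast haH i j
  refine (Set.ncard_le_ncard hsub (finite_toSet _)).trans ?_
  rw [Set.ncard_coe_finset]
  exact card_image_le

lemma HasGrowth.exists_ncard_singular_egyptian_le {E ε : ℝ}
    (h : HasGrowth (fun N => #(singularDenominators ι N)) E) (hE : 0 ≤ E) (hε : 0 < ε) :
    ∃ C : ℝ, ∀ H : ℝ, 1 ≤ H →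
      (Set.ncard {A : Matrix ι ι ℚ | (∀ i j, A i j ∈ Egyptian H) ∧ A.det = 0} : ℝ) ≤
        C * H ^ (E + ε) := by
  obtain ⟨C, hC, hbound⟩ := bound_of_isBigO_nat_atTop (h ε hε)
  refine ⟨C, fun H hH => ?_⟩
  have hfloor : 0 < (⌊H⌋₊ : ℝ) := mod_cast Nat.floor_pos.2 hH
  have hpow : 0 < (⌊H⌋₊ : ℝ) ^ (E + ε) := Real.rpow_pos_of_pos hfloor _
  calc (Set.ncard {A : Matrix ι ι ℚ | (∀ i j, A i j ∈ Egyptian H) ∧ A.det = 0} : ℝ)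
      ≤ #(singularDenominators ι ⌊H⌋₊) := mod_cast ncard_singular_egyptian_le H
    _ ≤ C * (⌊H⌋₊ : ℝ) ^ (E + ε) := by
        simpa [abs_of_pos hpow] using hbound hpow.ne'
    _ ≤ C * H ^ (E + ε) := by
        gcongr
        exact Nat.floor_le (by linarith)

end SingularMatrices

theorem stmt13 (n : ℕ) (hn : n ≥ 2) :
    ∀ ε > (0 : ℝ), ∃ C : ℝ, ∀ H : ℝ, H ≥ 2 →
      (n = 2 →
        (Set.ncard {A : Matrix (Fin n) (Fin n) ℚ |
            (∀ i j, A i j ∈ Egyptian H) ∧ A.det = 0} : ℝ) ≤ C * H ^ ((2 : ℝ) + ε)) ∧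
      (n = 3 →
        (Set.ncard {A : Matrix (Fin n) (Fin n) ℚ |
            (∀ i j, A i j ∈ Egyptian H) ∧ A.det = 0} : ℝ) ≤ C * H ^ ((7 : ℝ) + ε)) ∧
      (n ≥ 4 →
        (Set.ncard {A : Matrix (Fin n) (Fin n) ℚ |
            (∀ i j, A i j ∈ Egyptian H) ∧ A.det = 0} : ℝ) ≤
          C * H ^ ((n ^ 2 : ℝ) - n / 2 + ε)) := by
  intro ε hε
  obtain rfl | rfl | h4 : n = 2 ∨ n = 3 ∨ 4 ≤ n := by lia
  · obtain ⟨C, hC⟩ := hasGrowth_card_singularDenominators_fin_two.exists_ncard_singular_egyptian_le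
      zero_le_two hε
    exact ⟨C, fun H hH => ⟨fun _ => hC H (by linarith), by lia, by lia⟩⟩
  · obtain ⟨C, hC⟩ := (hasGrowth_card_singularDenominators_of_card_eq_three
      (Fintype.card_fin 3)).exists_ncard_singular_egyptian_le (by norm_num) hε
    exact ⟨C, fun H hH => ⟨by lia, fun _ => hC H (by linarith), by lia⟩⟩
  · have hgrowth := hasGrowth_card_singularDenominators_of_two_le (ι := Fin n) (by simpa using hn)
    rw [Fintype.card_fin] at hgrowth
    have hn' : (2 : ℝ) ≤ n := mod_cast hn
    obtain ⟨C, hC⟩ := hgrowth.exists_ncard_singular_egyptian_le (by nlinarith) hε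
    exact ⟨C, fun H hH => ⟨by lia, by lia, fun _ => hC H (by linarith)⟩⟩
end

section
/- Let A > 0 be a real constant. For every ε > 0 there exists a constant C = C(A, ε) such that the following holds for all real H ≥ 2 and all integers Q_0 and nonzero integers Q_1, …, Q_n with |Q_i| ≤ H^A for i = 1, …, n: the number of n-tuples (x_1, …, x_n) of nonzero integers with |x_i| ≤ H for all i satisfying Σ_{i=1}^n Q_i/x_i = Q_0 is (i) at most one if n = 1; (ii) at most C·H^{ε} if n = 2 and Q_0 ≠ 0, and at most C·H if n = 2 and Q_0 = 0; (iii) at most C·H^{1+ε} if n = 3. -/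
/-!
For `c = a / b ≠ 0` in lowest terms, clearing denominators in `q / x + r / y = c` and completing
the product gives `(a x - b q) (a y - b r) = b² q r`, so an equation in two unit fractions has at
most `2 d(b² q r)` solutions, and the divisor bound `d(m) ≪ m ^ δ` applies. In three unit fractions,
fix the first denominator `z`: the remaining right-hand side `c - q / z` is again a rational number
of small denominator, and it vanishes for at most one `z`, for which there are `O(H)` solutions.
-/

open Finset

section DivisorBound

theorem card_int_divisorsAntidiag (z : ℤ) : #z.divisorsAntidiag = 2 * #z.natAbs.divisors := by
  rcases z with n | n <;>
    simp [Int.divisorsAntidiag, -disjUnion_eq_union, ← Nat.map_div_right_divisors, two_mul]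

theorem natCast_add_one_le_pow {b : ℝ} (hb : 2 ≤ b) (k : ℕ) : (k : ℝ) + 1 ≤ b ^ k := by
  calc (k : ℝ) + 1 ≤ 1 + k * (b - 1) := by nlinarith [k.cast_nonneg (α := ℝ)]
    _ ≤ b ^ k := one_add_mul_sub_le_pow (by linarith) k

theorem natCast_add_one_le_div_mul_pow {a b : ℝ} (ha : 1 < a) (hab : a ≤ b) (k : ℕ) :
    (k : ℝ) + 1 ≤ a / (a - 1) * b ^ k := by
  have ha' : 0 < a - 1 := sub_pos.mpr ha
  calc (k : ℝ) + 1 ≤ a / (a - 1) * (1 + k * (a - 1)) := by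
        field_simp
        nlinarith [mul_nonneg (k.cast_nonneg (α := ℝ)) (sq_nonneg (a - 1))]
    _ ≤ a / (a - 1) * b ^ k := by
        gcongr
        exact (one_add_mul_sub_le_pow (by linarith) k).trans (by gcongr)

theorem natCast_add_one_le_ite_mul_pow {a b : ℝ} (ha : 1 < a) (hab : a ≤ b) (k : ℕ) :
    (k : ℝ) + 1 ≤ (if b < 2 then a / (a - 1) else 1) * b ^ k := by
  split_ifs with hb
  · exact natCast_add_one_le_div_mul_pow ha hab k
  · simpa using natCast_add_one_le_pow (not_lt.mp hb) k

theorem natCast_rpow_eq_prod_primeFactors {n : ℕ} (hn : n ≠ 0) (δ : ℝ) :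
    (n : ℝ) ^ δ = ∏ p ∈ n.primeFactors, ((p : ℝ) ^ δ) ^ n.factorization p := by
  have hprod : (n : ℝ) = ∏ p ∈ n.primeFactors, (p : ℝ) ^ n.factorization p := by
    exact_mod_cast (Nat.prod_factorization_pow_eq_self hn).symm
  conv_lhs => rw [hprod]
  rw [← Real.finsetProd_rpow _ _ fun p _ ↦ by positivity]
  exact prod_congr rfl fun p _ ↦ (Real.rpow_pow_comm p.cast_nonneg _ _).symm

theorem exists_card_divisors_le_mul_rpow_s18 {δ : ℝ} (hδ : 0 < δ) :
    ∃ C > 0, ∀ n : ℕ, (#n.divisors : ℝ) ≤ C * (n : ℝ) ^ δ := by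
  -- Only the finitely many primes with `p ^ δ < 2` contribute to the constant.
  obtain ⟨N, hN⟩ := exists_nat_gt ((2 : ℝ) ^ δ⁻¹)
  have hδ2 : 1 < (2 : ℝ) ^ δ := Real.one_lt_rpow one_lt_two hδ
  set K : ℝ := 2 ^ δ / (2 ^ δ - 1)
  have hK : 1 ≤ K := by
    rw [one_le_div (sub_pos.mpr hδ2)]
    linarith
  refine ⟨K ^ N, by positivity, fun n ↦ ?_⟩
  rcases eq_or_ne n 0 with rfl | hn
  · simp only [Nat.divisors_zero, card_empty, Nat.cast_zero]
    positivity
  have two_rpow_le : ∀ p ∈ n.primeFactors, (2 : ℝ) ^ δ ≤ (p : ℝ) ^ δ := by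
    intro p hp
    gcongr
    exact_mod_cast (Nat.prime_of_mem_primeFactors hp).two_le
  have card_small_primes : #{p ∈ n.primeFactors | ((p : ℕ) : ℝ) ^ δ < 2} ≤ N := by
    refine (card_le_card fun p hp ↦ mem_range.mpr ?_).trans_eq (card_range N)
    have hp2 : (p : ℝ) < 2 ^ δ⁻¹ :=
      (Real.lt_rpow_inv_iff_of_pos p.cast_nonneg zero_le_two hδ).mpr (mem_filter.mp hp).2
    exact_mod_cast hp2.trans hN
  calc (#n.divisors : ℝ) = ∏ p ∈ n.primeFactors, ((n.factorization p : ℝ) + 1) := by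
        rw [Nat.card_divisors hn]
        push_cast
        rfl
    _ ≤ ∏ p ∈ n.primeFactors,
          (if (p : ℝ) ^ δ < 2 then K else 1) * ((p : ℝ) ^ δ) ^ n.factorization p :=
        prod_le_prod (fun _ _ ↦ by positivity) fun p hp ↦
          natCast_add_one_le_ite_mul_pow hδ2 (two_rpow_le p hp) _
    _ = K ^ #{p ∈ n.primeFactors | ((p : ℕ) : ℝ) ^ δ < 2} * (n : ℝ) ^ δ := by
        rw [prod_mul_distrib, ← natCast_rpow_eq_prod_primeFactors hn, ← prod_filter, prod_const]
    _ ≤ K ^ N * (n : ℝ) ^ δ := by gcongr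

theorem exists_card_divisors_sq_mul_mul_le {B ε : ℝ} (hB : 0 < B) (hε : 0 < ε) :
    ∃ C > 0, ∀ H > 0, ∀ (b : ℕ) (q r : ℤ), (b : ℝ) ≤ H ^ B → |(q : ℝ)| ≤ H ^ B →
      |(r : ℝ)| ≤ H ^ B → (#((b : ℤ) ^ 2 * q * r).natAbs.divisors : ℝ) ≤ C * H ^ ε := by
  obtain ⟨C, hC, hdiv⟩ := exists_card_divisors_le_mul_rpow_s18 (δ := ε / (B * 4)) (by positivity)
  refine ⟨C, hC, fun H hH b q r hb hq hr ↦ (hdiv _).trans ?_⟩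
  have hsize : (((b : ℤ) ^ 2 * q * r).natAbs : ℝ) ≤ H ^ (B * 4) := by
    calc (((b : ℤ) ^ 2 * q * r).natAbs : ℝ) = (b : ℝ) ^ 2 * |(q : ℝ)| * |(r : ℝ)| := by
          simp [Nat.cast_natAbs, abs_mul]
      _ ≤ (H ^ B) ^ 2 * H ^ B * H ^ B := by gcongr
      _ = (H ^ B) ^ 4 := by ring
      _ = H ^ (B * 4) := by exact_mod_cast (Real.rpow_mul_natCast hH.le B 4).symm
  calc C * (((b : ℤ) ^ 2 * q * r).natAbs : ℝ) ^ (ε / (B * 4))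
      ≤ C * (H ^ (B * 4)) ^ (ε / (B * 4)) := by gcongr
    _ = C * H ^ ε := by rw [← Real.rpow_mul hH.le, mul_div_cancel₀ _ (by positivity)]

end DivisorBound

section EgyptianSolutions

/-- The denominators of the unit fractions in the set `E(H)` of Egyptian fractions of height at
most `H`, i.e. the nonzero integers `a` with `|a| ≤ H`. -/
noncomputable def egyptianDenominators (H : ℝ) : Finset ℤ :=
  (Icc (-⌊H⌋) ⌊H⌋).erase 0

/-- The solutions of the linear equation `∑ i, Q i / x i = c` in Egyptian fractions of height at
most `H`, encoded by their tuples of denominators. The right-hand side is allowed to be rational so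
that fixing one of the unknowns leaves an equation of the same kind. -/
noncomputable def egyptianSolutions {n : ℕ} (H : ℝ) (Q : Fin n → ℤ) (c : ℚ) :
    Finset (Fin n → ℤ) :=
  {x ∈ Fintype.piFinset fun _ ↦ egyptianDenominators H | ∑ i, (Q i : ℚ) / x i = c}

variable {n : ℕ} {H : ℝ} {c : ℚ}

theorem mem_egyptianDenominators {a : ℤ} :
    a ∈ egyptianDenominators H ↔ a ≠ 0 ∧ |(a : ℝ)| ≤ H := by
  rw [egyptianDenominators, mem_erase, mem_Icc, ← abs_le, Int.le_floor, Int.cast_abs]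

theorem card_egyptianDenominators_le (hH : 0 ≤ H) : (#(egyptianDenominators H) : ℝ) ≤ 2 * H := by
  have hfloor : 0 ≤ ⌊H⌋ := Int.floor_nonneg.mpr hH
  have hcard : (#(egyptianDenominators H) : ℤ) = 2 * ⌊H⌋ := by
    rw [egyptianDenominators, card_erase_of_mem (by simpa using hfloor), Int.card_Icc]
    lia
  calc (#(egyptianDenominators H) : ℝ) = 2 * ⌊H⌋ := by exact_mod_cast hcard
    _ ≤ 2 * H := by gcongr; exact Int.floor_le H

theorem mem_egyptianSolutions {Q : Fin n → ℤ} {x : Fin n → ℤ} :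
    x ∈ egyptianSolutions H Q c ↔
      (∀ i, x i ∈ egyptianDenominators H) ∧ ∑ i, (Q i : ℚ) / x i = c := by
  rw [egyptianSolutions, mem_filter, Fintype.mem_piFinset]

theorem coe_egyptianSolutions (H : ℝ) (Q : Fin n → ℤ) (c : ℚ) :
    (egyptianSolutions H Q c : Set (Fin n → ℤ)) =
      {x | (∀ i, x i ≠ 0 ∧ |(x i : ℝ)| ≤ H) ∧ ∑ i, (Q i : ℚ) / x i = c} := by
  ext x
  simp only [mem_coe, mem_egyptianSolutions, mem_egyptianDenominators, Set.mem_ofPred_eq]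

theorem card_egyptianSolutions_succ (H : ℝ) (Q : Fin (n + 1) → ℤ) (c : ℚ) :
    #(egyptianSolutions H Q c) =
      ∑ z ∈ egyptianDenominators H, #(egyptianSolutions H (Fin.tail Q) (c - Q 0 / z)) := by
  rw [← card_sigma]
  refine card_nbij' (fun x ↦ ⟨x 0, Fin.tail x⟩) (fun p ↦ Fin.cons p.1 p.2) ?_ ?_ ?_ ?_
  · intro x hx
    rw [mem_coe, mem_egyptianSolutions, Fin.sum_univ_succ] at hx
    rw [mem_coe, mem_sigma, mem_egyptianSolutions]
    exact ⟨hx.1 0, fun i ↦ hx.1 i.succ, eq_sub_of_add_eq' hx.2⟩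
  · rintro ⟨z, y⟩ hp
    rw [mem_coe, mem_sigma, mem_egyptianSolutions] at hp
    rw [mem_coe, mem_egyptianSolutions, Fin.sum_univ_succ, Fin.forall_fin_succ]
    exact ⟨⟨hp.1, hp.2.1⟩, add_eq_of_eq_sub' hp.2.2⟩
  · exact fun x _ ↦ Fin.cons_self_tail x
  · exact fun p _ ↦ rfl

theorem intCast_div_injective {q : ℤ} (hq : q ≠ 0) :
    Function.Injective fun z : ℤ ↦ (q : ℚ) / z := by
  intro x y hxy
  simpa [div_eq_mul_inv, hq] using hxy

theorem card_egyptianSolutions_le_pow (H : ℝ) {Q : Fin (n + 1) → ℤ} (hQ : Q (Fin.last n) ≠ 0)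
    (c : ℚ) : #(egyptianSolutions H Q c) ≤ #(egyptianDenominators H) ^ n := by
  induction n generalizing c with
  | zero =>
    rw [pow_zero, card_le_one]
    intro x hx y hy
    rw [mem_egyptianSolutions, Fin.sum_univ_one] at hx hy
    refine funext (Fin.forall_fin_one.mpr ?_)
    exact intCast_div_injective hQ (hx.2.trans hy.2.symm)
  | succ n ih =>
    rw [card_egyptianSolutions_succ, pow_succ', ← smul_eq_mul]
    exact sum_le_card_nsmul _ _ _ fun z _ ↦ ih (Q := Fin.tail Q) hQ _

theorem num_mul_sub_mul_num_mul_sub_eq {q r x y : ℤ} (hx : x ≠ 0) (hy : y ≠ 0)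
    (h : (q : ℚ) / x + r / y = c) :
    (c.num * x - c.den * q) * (c.num * y - c.den * r) = (c.den : ℤ) ^ 2 * q * r := by
  have hx' : (x : ℚ) ≠ 0 := Int.cast_ne_zero.mpr hx
  have hy' : (y : ℚ) ≠ 0 := Int.cast_ne_zero.mpr hy
  have hnum : (c.num : ℚ) = c * c.den := (Rat.mul_den_eq_num c).symm
  have cleared : (q : ℚ) * y + r * x = c * x * y := by
    rw [← h]
    field_simp
  qify
  rw [hnum]
  linear_combination -(c * (c.den : ℚ) ^ 2) * cleared

theorem card_egyptianSolutions_two_le (H : ℝ) {Q : Fin 2 → ℤ} (hQ : ∀ i, Q i ≠ 0) (hc : c ≠ 0) :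
    #(egyptianSolutions H Q c) ≤ 2 * #((c.den : ℤ) ^ 2 * Q 0 * Q 1).natAbs.divisors := by
  rw [← card_int_divisorsAntidiag]
  refine card_le_card_of_injOn
    (fun x ↦ (c.num * x 0 - c.den * Q 0, c.num * x 1 - c.den * Q 1)) ?_ ?_
  · intro x hx
    rw [mem_coe, mem_egyptianSolutions, Fin.sum_univ_two] at hx
    have hx0 (i : Fin 2) : x i ≠ 0 := (mem_egyptianDenominators.mp (hx.1 i)).1
    have hne : (c.den : ℤ) ^ 2 * Q 0 * Q 1 ≠ 0 := by simp [hQ]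
    exact Int.mem_divisorsAntidiag.mpr ⟨num_mul_sub_mul_num_mul_sub_eq (hx0 0) (hx0 1) hx.2, hne⟩
  · intro x _ y _ hxy
    have hnum : c.num ≠ 0 := Rat.num_ne_zero.mpr hc
    simpa [hnum, funext_iff, Fin.forall_fin_two] using hxy

theorem card_egyptianSolutions_three_le (H : ℝ) {Q : Fin 3 → ℤ} (hQ : ∀ i, Q i ≠ 0) (c : ℚ) :
    #(egyptianSolutions H Q c) ≤ #(egyptianDenominators H) +
      ∑ z ∈ egyptianDenominators H,
        2 * #(((c - Q 0 / z).den : ℤ) ^ 2 * Q 1 * Q 2).natAbs.divisors := by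
  set E := egyptianDenominators H
  have fiber_le (z : ℤ) : #(egyptianSolutions H (Fin.tail Q) (c - Q 0 / z)) ≤
      (if (Q 0 : ℚ) / z = c then #E else 0) +
        2 * #(((c - Q 0 / z).den : ℤ) ^ 2 * Q 1 * Q 2).natAbs.divisors := by
    split_ifs with hz
    · refine le_add_right ?_
      simpa using card_egyptianSolutions_le_pow H (Q := Fin.tail Q) (hQ 2) (c - Q 0 / z)
    · rw [zero_add]
      exact card_egyptianSolutions_two_le H (fun i ↦ hQ i.succ) (sub_ne_zero.mpr (Ne.symm hz))
  have degenerate_le_one : #{z ∈ E | (Q 0 : ℚ) / (z : ℤ) = c} ≤ 1 := by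
    rw [card_le_one]
    intro x hx y hy
    exact intCast_div_injective (hQ 0) ((mem_filter.mp hx).2.trans (mem_filter.mp hy).2.symm)
  rw [card_egyptianSolutions_succ]
  refine (sum_le_sum fun z _ ↦ fiber_le z).trans ?_
  rw [sum_add_distrib, ← sum_filter, sum_const, smul_eq_mul]
  gcongr
  exact mul_le_of_le_one_left' degenerate_le_one

theorem den_sub_intCast_div_le (c : ℚ) (q : ℤ) {z : ℤ} (hz : z ≠ 0) :
    (c - q / z).den ≤ c.den * z.natAbs := by
  have hdvd : ((q : ℚ) / z).den ∣ z.natAbs := by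
    rw [← Rat.divInt_eq_div]
    exact Int.natCast_dvd.mp (Rat.den_dvd q z)
  exact Nat.le_of_dvd (Nat.mul_pos c.den_pos (Int.natAbs_pos.mpr hz))
    ((Rat.sub_den_dvd _ _).trans (mul_dvd_mul_left _ hdvd))

theorem card_egyptianSolutions_three_le_of_card_divisors_le (hH : 0 ≤ H) {Q : Fin 3 → ℤ}
    (hQ : ∀ i, Q i ≠ 0) {D : ℝ}
    (hD : ∀ b : ℕ, b ≤ c.den * H → (#((b : ℤ) ^ 2 * Q 1 * Q 2).natAbs.divisors : ℝ) ≤ D) :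
    (#(egyptianSolutions H Q c) : ℝ) ≤ 2 * H * (1 + 2 * D) := by
  set E := egyptianDenominators H
  have hD0 : 0 ≤ D := (Nat.cast_nonneg _).trans (hD 0 (by simpa using by positivity))
  have hden : ∀ z ∈ E, ((c - Q 0 / z).den : ℝ) ≤ c.den * H := by
    intro z hz
    obtain ⟨hz0, hzH⟩ := mem_egyptianDenominators.mp hz
    calc ((c - Q 0 / z).den : ℝ) ≤ c.den * z.natAbs := by
          exact_mod_cast den_sub_intCast_div_le c (Q 0) hz0
      _ ≤ c.den * H := by
          rw [Nat.cast_natAbs, Int.cast_abs]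
          gcongr
  calc (#(egyptianSolutions H Q c) : ℝ)
      ≤ #E + ∑ z ∈ E, 2 * (#(((c - Q 0 / z).den : ℤ) ^ 2 * Q 1 * Q 2).natAbs.divisors : ℝ) := by
        exact_mod_cast card_egyptianSolutions_three_le H hQ c
    _ ≤ #E + ∑ _z ∈ E, 2 * D := by
        gcongr with z hz
        exact hD _ (hden z hz)
    _ = #E * (1 + 2 * D) := by
        rw [sum_const, nsmul_eq_mul]
        ring
    _ ≤ 2 * H * (1 + 2 * D) := by
        gcongr
        exact card_egyptianDenominators_le hH

end EgyptianSolutions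

theorem stmt18_general {A ε : ℝ} (hA : 0 ≤ A) (hε : 0 < ε) :
    ∃ C : ℝ, ∀ H ≥ 1, ∀ (n : ℕ) (c : ℚ) (Q : Fin n → ℤ), (∀ i, Q i ≠ 0) →
      (n = 1 → #(egyptianSolutions H Q c) ≤ 1) ∧
      (n = 2 → c ≠ 0 → (c.den : ℝ) ≤ H ^ A → (∀ i, |(Q i : ℝ)| ≤ H ^ A) →
        (#(egyptianSolutions H Q c) : ℝ) ≤ C * H ^ ε) ∧
      (n = 2 → (#(egyptianSolutions H Q c) : ℝ) ≤ C * H) ∧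
      (n = 3 → (c.den : ℝ) ≤ H ^ A → (∀ i, i.val ≠ 0 → |(Q i : ℝ)| ≤ H ^ A) →
        (#(egyptianSolutions H Q c) : ℝ) ≤ C * H ^ (1 + ε)) := by
  obtain ⟨C, hC, hdiv⟩ := exists_card_divisors_sq_mul_mul_le (B := 1 + A) (by positivity) hε
  refine ⟨4 * C + 2, fun H hH n c Q hQ ↦ ?_⟩
  have hH0 : 0 < H := by linarith
  have hHε : 1 ≤ H ^ ε := Real.one_le_rpow hH hε.le
  have hHA : H ^ A ≤ H ^ (1 + A) := Real.rpow_le_rpow_of_exponent_le hH (by linarith)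
  refine ⟨?_, ?_, ?_, ?_⟩
  · rintro rfl
    simpa using card_egyptianSolutions_le_pow H (hQ _) c
  · rintro rfl hc hden hQA
    have hcard : (#(egyptianSolutions H Q c) : ℝ) ≤
        2 * #((c.den : ℤ) ^ 2 * Q 0 * Q 1).natAbs.divisors :=
      mod_cast card_egyptianSolutions_two_le H hQ hc
    have hdivisors := hdiv H hH0 c.den (Q 0) (Q 1) (hden.trans hHA) ((hQA 0).trans hHA)
      ((hQA 1).trans hHA)
    nlinarith
  · rintro rfl
    have hcard : (#(egyptianSolutions H Q c) : ℝ) ≤ #(egyptianDenominators H) :=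
      mod_cast (card_egyptianSolutions_le_pow H (hQ _) c).trans_eq (pow_one _)
    nlinarith [card_egyptianDenominators_le hH0.le]
  · rintro rfl hden hQA
    have hdenH : c.den * H ≤ H ^ (1 + A) := by
      rw [Real.rpow_add hH0, Real.rpow_one, mul_comm]
      gcongr
    have hcard := card_egyptianSolutions_three_le_of_card_divisors_le hH0.le hQ fun b hb ↦
      hdiv H hH0 b _ _ (hb.trans hdenH) ((hQA 1 (by decide)).trans hHA)
        ((hQA 2 (by decide)).trans hHA)
    rw [Real.rpow_add hH0, Real.rpow_one]
    nlinarith [le_mul_of_one_le_right hH0.le hHε]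

theorem stmt18 (A : ℝ) (hA : A > 0) :
    ∀ ε > (0 : ℝ), ∃ C : ℝ, ∀ H : ℝ, H ≥ 2 →
      ∀ n : ℕ, ∀ Q₀ : ℤ, ∀ Q : Fin n → ℤ,
      (∀ i, Q i ≠ 0) → (∀ i, (|Q i| : ℝ) ≤ H ^ A) →
      (n = 1 →
        Set.ncard {x : Fin n → ℤ |
            (∀ i, x i ≠ 0 ∧ (|x i| : ℝ) ≤ H) ∧
            ∑ i, (Q i : ℚ) / (x i : ℚ) = (Q₀ : ℚ)} ≤ 1) ∧
      (n = 2 → Q₀ ≠ 0 →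
        (Set.ncard {x : Fin n → ℤ |
            (∀ i, x i ≠ 0 ∧ (|x i| : ℝ) ≤ H) ∧
            ∑ i, (Q i : ℚ) / (x i : ℚ) = (Q₀ : ℚ)} : ℝ) ≤ C * H ^ ε) ∧
      (n = 2 → Q₀ = 0 →
        (Set.ncard {x : Fin n → ℤ |
            (∀ i, x i ≠ 0 ∧ (|x i| : ℝ) ≤ H) ∧
            ∑ i, (Q i : ℚ) / (x i : ℚ) = (Q₀ : ℚ)} : ℝ) ≤ C * H) ∧
      (n = 3 →
        (Set.ncard {x : Fin n → ℤ |
            (∀ i, x i ≠ 0 ∧ (|x i| : ℝ) ≤ H) ∧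
            ∑ i, (Q i : ℚ) / (x i : ℚ) = (Q₀ : ℚ)} : ℝ) ≤ C * H ^ ((1 : ℝ) + ε)) := by
  intro ε hε
  obtain ⟨C, hC⟩ := stmt18_general hA.le hε
  refine ⟨C, fun H hH n Q₀ Q hQ hQA ↦ ?_⟩
  have hden : ((Q₀ : ℚ).den : ℝ) ≤ H ^ A := by
    simpa using Real.one_le_rpow (by linarith : 1 ≤ H) hA.le
  simp only [← coe_egyptianSolutions, Set.ncard_coe_finset]
  obtain ⟨one, two, two_zero, three⟩ := hC H (by linarith) n Q₀ Q hQ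
  exact ⟨one, fun hn hQ₀ ↦ two hn (Int.cast_ne_zero.mpr hQ₀) hden hQA, fun hn _ ↦ two_zero hn,
    fun hn ↦ three hn hden fun i _ ↦ hQA i⟩
end
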